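/- Let g : ℝ³ → ℝ³ satisfy g(0) = 0, the strong monotonicity condition (g(x) − g(y))·(x − y) ≥ c₁|x − y|² for all x, y ∈ ℝ³, and the Lipschitz condition |g(x) − g(y)| ≤ c₂|x − y| for all x, y ∈ ℝ³, with constants c₁, c₂ > 0. Let γ₁, γ₂ > 0 satisfy γ₁ c₁ > γ₂ c₂ and let ξ satisfy γ₂ c₂ / 2 < ξ < γ₁ c₁ − γ₂ c₂ / 2. Then for all z₀, z₁ ∈ ℝ³: −(γ₁ g(z₀) + γ₂ g(z₁))·z₀ + ξ(|z₀|² − |z₁|²) ≤ −min(γ₁ c₁ − γ₂ c₂/2 − ξ, ξ − γ₂ c₂/2) · (|z₀|² + |z₁|²). -/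

import Mathlib

open scoped RealInnerProductSpace

/-!
Coercivity of `g` damps the instantaneous trace at rate `γ₁c₁`. The delayed term is indefinite:
Cauchy–Schwarz, linear growth and Young's inequality bound it by `γ₂c₂/2` times
`|z₀|² + |z₁|²`. The Lyapunov correction then moves an amount `ξ` of the damping from `|z₀|²`
to `|z₁|²`.
-/

theorem min_mul_add_le_mul_add_mul {R : Type*} [Semiring R] [LinearOrder R] [IsOrderedRing R]
    (a b : R) {s t : R} (hs : 0 ≤ s) (ht : 0 ≤ t) :
    min a b * (s + t) ≤ a * s + b * t := by
  rw [mul_add]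
  gcongr
  exacts [min_le_left a b, min_le_right a b]

section InnerProductSpace

variable {E : Type*} [SeminormedAddCommGroup E] [InnerProductSpace ℝ E]

theorem neg_real_inner_le_of_norm_le_mul_norm {v x y : E} {c : ℝ} (hc : 0 ≤ c)
    (hv : ‖v‖ ≤ c * ‖y‖) : -⟪v, x⟫ ≤ c / 2 * (‖x‖ ^ 2 + ‖y‖ ^ 2) :=
  calc
    -⟪v, x⟫ ≤ ‖v‖ * ‖x‖ := (neg_le_abs _).trans (abs_real_inner_le_norm v x)
    _ ≤ c * ‖y‖ * ‖x‖ := by gcongr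
    _ = c / 2 * (2 * ‖x‖ * ‖y‖) := by ring
    _ ≤ c / 2 * (‖x‖ ^ 2 + ‖y‖ ^ 2) := by gcongr; exact two_mul_le_add_sq _ _

theorem neg_real_inner_smul_add_smul_le {u v x y : E} {c₁ c₂ γ₁ γ₂ : ℝ}
    (hc₂ : 0 ≤ c₂) (hγ₁ : 0 ≤ γ₁) (hγ₂ : 0 ≤ γ₂)
    (hu : c₁ * ‖x‖ ^ 2 ≤ ⟪u, x⟫) (hv : ‖v‖ ≤ c₂ * ‖y‖) :
    -⟪γ₁ • u + γ₂ • v, x⟫ ≤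
      -(γ₁ * c₁ - γ₂ * c₂ / 2) * ‖x‖ ^ 2 + γ₂ * c₂ / 2 * ‖y‖ ^ 2 :=
  calc
    -⟪γ₁ • u + γ₂ • v, x⟫ = -(γ₁ * ⟪u, x⟫) + γ₂ * -⟪v, x⟫ := by
      rw [inner_add_left, real_inner_smul_left, real_inner_smul_left]
      ring
    _ ≤ -(γ₁ * (c₁ * ‖x‖ ^ 2)) + γ₂ * (c₂ / 2 * (‖x‖ ^ 2 + ‖y‖ ^ 2)) := by
      gcongr
      exact neg_real_inner_le_of_norm_le_mul_norm hc₂ hv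
    _ = -(γ₁ * c₁ - γ₂ * c₂ / 2) * ‖x‖ ^ 2 + γ₂ * c₂ / 2 * ‖y‖ ^ 2 := by ring

theorem boundary_feedback_dissipation_upper_general {g : E → E} {c₁ c₂ γ₁ γ₂ : ℝ}
    (hc₂ : 0 ≤ c₂) (hγ₁ : 0 ≤ γ₁) (hγ₂ : 0 ≤ γ₂)
    (hcoercive : ∀ x, c₁ * ‖x‖ ^ 2 ≤ ⟪g x, x⟫) (hgrowth : ∀ x, ‖g x‖ ≤ c₂ * ‖x‖)
    (ξ : ℝ) (z₀ z₁ : E) :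
    -⟪γ₁ • g z₀ + γ₂ • g z₁, z₀⟫ + ξ * (‖z₀‖ ^ 2 - ‖z₁‖ ^ 2) ≤
      -(min (γ₁ * c₁ - γ₂ * c₂ / 2 - ξ) (ξ - γ₂ * c₂ / 2)) * (‖z₀‖ ^ 2 + ‖z₁‖ ^ 2) := by
  calc
    _ ≤ -(γ₁ * c₁ - γ₂ * c₂ / 2) * ‖z₀‖ ^ 2 + γ₂ * c₂ / 2 * ‖z₁‖ ^ 2
          + ξ * (‖z₀‖ ^ 2 - ‖z₁‖ ^ 2) := by
      gcongr
      exact neg_real_inner_smul_add_smul_le hc₂ hγ₁ hγ₂ (hcoercive z₀) (hgrowth z₁)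
    _ = -((γ₁ * c₁ - γ₂ * c₂ / 2 - ξ) * ‖z₀‖ ^ 2 + (ξ - γ₂ * c₂ / 2) * ‖z₁‖ ^ 2) := by ring
    _ ≤ _ := by
      rw [neg_mul]
      gcongr
      exact min_mul_add_le_mul_add_mul _ _ (sq_nonneg _) (sq_nonneg _)

end InnerProductSpace

/-- Pointwise dissipation estimate at the heart of Lemma 3.1 (upper energy–damping
inequality (3.5)): the boundary feedback term plus the Lyapunov correction
`ξ(|z₀|² − |z₁|²)` is bounded above by a negative multiple of `|z₀|² + |z₁|²`,
provided `γ₁c₁ > γ₂c₂` and `ξ ∈ (γ₂c₂/2, γ₁c₁ − γ₂c₂/2)`. -/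
theorem boundary_feedback_dissipation_upper
    (g : EuclideanSpace ℝ (Fin 3) → EuclideanSpace ℝ (Fin 3))
    (c₁ c₂ : ℝ) (hc₁ : 0 < c₁) (hc₂ : 0 < c₂)
    (hg0 : g 0 = 0)
    (hmono : ∀ x y : EuclideanSpace ℝ (Fin 3), c₁ * ‖x - y‖ ^ 2 ≤ ⟪g x - g y, x - y⟫)
    (hlip : ∀ x y : EuclideanSpace ℝ (Fin 3), ‖g x - g y‖ ≤ c₂ * ‖x - y‖)
    (γ₁ γ₂ ξ : ℝ) (hγ₁ : 0 < γ₁) (hγ₂ : 0 < γ₂)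
    (hgain : γ₂ * c₂ < γ₁ * c₁)
    (hξ₁ : γ₂ * c₂ / 2 < ξ) (hξ₂ : ξ < γ₁ * c₁ - γ₂ * c₂ / 2) :
    ∀ z₀ z₁ : EuclideanSpace ℝ (Fin 3),
      -⟪γ₁ • g z₀ + γ₂ • g z₁, z₀⟫ + ξ * (‖z₀‖ ^ 2 - ‖z₁‖ ^ 2) ≤
        -(min (γ₁ * c₁ - γ₂ * c₂ / 2 - ξ) (ξ - γ₂ * c₂ / 2)) * (‖z₀‖ ^ 2 + ‖z₁‖ ^ 2) :=
  boundary_feedback_dissipation_upper_general hc₂.le hγ₁.le hγ₂.le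
    (fun x ↦ by simpa [hg0] using hmono x 0) (fun x ↦ by simpa [hg0] using hlip x 0) ξ
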